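/- Let a ≥ b ≥ k ≥ 1. Then the image of γ_k: Λ^a⊗Λ^k⊗Λ^{b−k} → Λ^a⊗Λ^b is contained in the image of θ_1: Λ^{a+1}⊗Λ^{b−1} → Λ^a⊗Λ^b. -/

import Mathlib

open TensorProduct

set_option synthInstance.maxHeartbeats 1000000
set_option maxSynthPendingDepth 3
set_option maxHeartbeats 1000000

noncomputable section

namespace MMS

variable (K : Type) [Field K] [CharZero K] (n : ℕ)

/-- `V = K^n`, the natural module of `G = GL(n,K)`. -/
abbrev V : Type := Fin n → K

/-- `Λ^p`, the `p`-th exterior power of `V`. -/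
abbrev Lam (p : ℕ) : Type := ⋀[K]^p (V K n)

/-- The wedge `v_1 ∧ ⋯ ∧ v_p ∈ Λ^p`. -/
def wedge {p : ℕ} (v : Fin p → V K n) : Lam K n p :=
  ⟨ExteriorAlgebra.ιMulti K p v, ExteriorAlgebra.ιMulti_range K p (Set.mem_range_self v)⟩

/-- Transport along an equality of degrees. -/
def ecast {p q : ℕ} (h : p = q) : Lam K n p ≃ₗ[K] Lam K n q :=
  h ▸ LinearEquiv.refl K (Lam K n p)

/-- `m` is the wedge multiplication map `Λ^p ⊗ Λ^q → Λ^{p+q}`. -/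
def IsMulMap (p q : ℕ) (m : Lam K n p ⊗[K] Lam K n q →ₗ[K] Lam K n (p+q)) : Prop :=
  ∀ (v : Fin p → V K n) (w : Fin q → V K n),
    m (wedge K n v ⊗ₜ[K] wedge K n w) = wedge K n (Fin.append v w)

/-- The set of `(p,q)`-shuffles: permutations `σ` of `{1, …, p+q}` which are strictly
increasing on the first `p` and on the last `q` indices. -/
def shuffles (p q : ℕ) : Finset (Equiv.Perm (Fin (p+q))) :=
  Finset.univ.filter (fun σ =>
    (∀ i j : Fin (p+q), i < j → (j : ℕ) < p → σ i < σ j) ∧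
    (∀ i j : Fin (p+q), i < j → p ≤ (i : ℕ) → σ i < σ j))

/-- `D` is the component `Δ_{p,q} : Λ^{p+q} → Λ^p ⊗ Λ^q` of the comultiplication, i.e.
`Δ_{p,q}(v_1 ∧ ⋯ ∧ v_{p+q}) = Σ_σ sgn(σ) (v_{σ(1)} ∧ ⋯ ∧ v_{σ(p)}) ⊗ (v_{σ(p+1)} ∧ ⋯ ∧ v_{σ(p+q)})`,
the sum being over all `(p,q)`-shuffles. -/
def IsComulMap (p q : ℕ) (D : Lam K n (p+q) →ₗ[K] Lam K n p ⊗[K] Lam K n q) : Prop :=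
  ∀ v : Fin (p+q) → V K n,
    D (wedge K n v) =
      ∑ σ ∈ shuffles p q,
        (Equiv.Perm.sign σ : ℤ) •
          (wedge K n (fun i => v (σ (Fin.castAdd q i))) ⊗ₜ[K]
            wedge K n (fun i => v (σ (Fin.natAdd p i))))

variable (mf : ∀ p q : ℕ, Lam K n p ⊗[K] Lam K n q →ₗ[K] Lam K n (p+q))
variable (Df : ∀ p q : ℕ, Lam K n (p+q) →ₗ[K] Lam K n p ⊗[K] Lam K n q)

/-- The map `δ_t = (m ⊗ 1) ∘ (1 ⊗ Δ_{t,b-t}) : Λ^a ⊗ Λ^b → Λ^{a+t} ⊗ Λ^{b-t}`. -/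
def deltaMap (a b t : ℕ) (ht : t ≤ b) :
    Lam K n a ⊗[K] Lam K n b →ₗ[K] Lam K n (a+t) ⊗[K] Lam K n (b-t) :=
  (TensorProduct.map (mf a t) LinearMap.id)
    ∘ₗ (TensorProduct.assoc K (Lam K n a) (Lam K n t) (Lam K n (b-t))).symm.toLinearMap
    ∘ₗ (TensorProduct.map LinearMap.id
        ((Df t (b-t)) ∘ₗ (ecast K n (by omega : b = t + (b-t))).toLinearMap))

/-- The map `θ_t = (1 ⊗ m) ∘ (Δ_{a-t,t} ⊗ 1) : Λ^a ⊗ Λ^b → Λ^{a-t} ⊗ Λ^{b+t}`. -/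
def thetaMap (a b t : ℕ) (ht : t ≤ a) :
    Lam K n a ⊗[K] Lam K n b →ₗ[K] Lam K n (a-t) ⊗[K] Lam K n (b+t) :=
  (TensorProduct.map LinearMap.id
      ((ecast K n (by omega : t + b = b + t)).toLinearMap ∘ₗ mf t b))
    ∘ₗ (TensorProduct.assoc K (Lam K n (a-t)) (Lam K n t) (Lam K n b)).toLinearMap
    ∘ₗ (TensorProduct.map
        ((Df (a-t) t) ∘ₗ (ecast K n (by omega : a = (a-t) + t)).toLinearMap) LinearMap.id)

/-- The map `Φ_t = θ_t ∘ δ_t : Λ^a ⊗ Λ^b → Λ^a ⊗ Λ^b`. -/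
def PhiMap (a b t : ℕ) (hta : t ≤ a) (htb : t ≤ b) :
    Lam K n a ⊗[K] Lam K n b →ₗ[K] Lam K n a ⊗[K] Lam K n b :=
  (TensorProduct.congr (ecast K n (by omega : a + t - t = a))
      (ecast K n (by omega : b - t + t = b))).toLinearMap
    ∘ₗ thetaMap K n mf Df (a+t) (b-t) t (by omega)
    ∘ₗ deltaMap K n mf Df a b t htb

/-- The map `Φ_t`, extended by `0` to all `t`. -/
def PhiMap' (a b t : ℕ) :
    Lam K n a ⊗[K] Lam K n b →ₗ[K] Lam K n a ⊗[K] Lam K n b :=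
  if h : t ≤ a ∧ t ≤ b then PhiMap K n mf Df a b t h.1 h.2 else 0

/-- The map `θ_1 : Λ^{a+1} ⊗ Λ^{b-1} → Λ^a ⊗ Λ^b` (for `b ≥ 1`). -/
def theta1 (a b : ℕ) (hb : 1 ≤ b) :
    Lam K n (a+1) ⊗[K] Lam K n (b-1) →ₗ[K] Lam K n a ⊗[K] Lam K n b :=
  (TensorProduct.congr (ecast K n (by omega : a + 1 - 1 = a))
      (ecast K n (by omega : b - 1 + 1 = b))).toLinearMap
    ∘ₗ thetaMap K n mf Df (a+1) (b-1) 1 (by omega)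

/-- The submodule of relations defining the Schur module `L_{(a,b)}`: the image of
`θ_1` if `b ≥ 1`, and `0` if `b = 0`. -/
def schurRel (a b : ℕ) : Submodule K (Lam K n a ⊗[K] Lam K n b) :=
  if hb : 1 ≤ b then LinearMap.range (theta1 K n mf Df a b hb) else ⊥

/-- The Schur module `L_{(a,b)}`, realized as the cokernel of `θ_1` (in characteristic zero). -/
abbrev SchurL (a b : ℕ) : Type :=
  (Lam K n a ⊗[K] Lam K n b) ⧸ schurRel K n mf Df a b

/-- The projection `π_{(a,b)} : Λ^a ⊗ Λ^b → L_{(a,b)}`. -/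
def schurProj (a b : ℕ) : Lam K n a ⊗[K] Lam K n b →ₗ[K] SchurL K n mf Df a b :=
  (schurRel K n mf Df a b).mkQ

/-- The coefficient `c_t(a,b,i) = C(i,t)·C(a-b+t+i,t)`. -/
def cCoef (a b t i : ℕ) : ℕ := (i.choose t) * ((a-b+t+i).choose t)

/-- The group `G = GL(n,K)`. -/
abbrev GLn : Type := Matrix.GeneralLinearGroup (Fin n) K

/-- `rho` is the family of natural actions of `G = GL(n,K)` on the exterior powers `Λ^p`
of the natural module `V = K^n`. -/
def IsExtAction (rho : ∀ p : ℕ, GLn K n → (Lam K n p →ₗ[K] Lam K n p)) : Prop :=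
  ∀ (p : ℕ) (g : GLn K n) (v : Fin p → V K n),
    rho p g (wedge K n v) =
      wedge K n (fun i => Matrix.toLin' (g : Matrix (Fin n) (Fin n) K) (v i))

/-- The action of `g ∈ GL(n,K)` on `Λ^a ⊗ Λ^b`. -/
def rhoT (rho : ∀ p : ℕ, GLn K n → (Lam K n p →ₗ[K] Lam K n p)) (a b : ℕ) (g : GLn K n) :
    Lam K n a ⊗[K] Lam K n b →ₗ[K] Lam K n a ⊗[K] Lam K n b :=
  TensorProduct.map (rho a g) (rho b g)

/-- The quotients `M₁ ⧸ N₁` and `M₂ ⧸ N₂` are isomorphic as representations, with respect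
to the given actions `ρ₁, ρ₂` on `M₁` and `M₂` (which descend to the quotients). -/
def IsQuotIso {G' : Type} {M₁ M₂ : Type} [AddCommGroup M₁] [Module K M₁]
    [AddCommGroup M₂] [Module K M₂]
    (N₁ : Submodule K M₁) (N₂ : Submodule K M₂)
    (ρ₁ : G' → M₁ →ₗ[K] M₁) (ρ₂ : G' → M₂ →ₗ[K] M₂) : Prop :=
  ∃ e : (M₁ ⧸ N₁) ≃ₗ[K] (M₂ ⧸ N₂),
    ∀ (g : G') (x : M₁) (y : M₂),
      e (Submodule.Quotient.mk x) = Submodule.Quotient.mk y →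
      e (Submodule.Quotient.mk (ρ₁ g x)) = Submodule.Quotient.mk (ρ₂ g y)

/-- The "multiply in pairs" map
`(Λ^{p₁} ⊗ Λ^{q₁}) ⊗ (Λ^{p₂} ⊗ Λ^{q₂}) → Λ^{p₁+p₂} ⊗ Λ^{q₁+q₂}`. -/
def pairMul (p₁ q₁ p₂ q₂ : ℕ) :
    (Lam K n p₁ ⊗[K] Lam K n q₁) ⊗[K] (Lam K n p₂ ⊗[K] Lam K n q₂) →ₗ[K]
      Lam K n (p₁+p₂) ⊗[K] Lam K n (q₁+q₂) :=
  (TensorProduct.map (mf p₁ p₂) (mf q₁ q₂))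
    ∘ₗ (TensorProduct.tensorTensorTensorComm K (Lam K n p₁) (Lam K n q₁)
        (Lam K n p₂) (Lam K n q₂)).toLinearMap

/-- The map `φ_k = (m ⊗ m) ∘ (1 ⊗ τ ⊗ 1) ∘ (Δ_{a-k,k} ⊗ Δ_{k,b-k}) : Λ^a ⊗ Λ^b → Λ^a ⊗ Λ^b`. -/
def phiSmall (a b k : ℕ) (hka : k ≤ a) (hkb : k ≤ b) :
    Lam K n a ⊗[K] Lam K n b →ₗ[K] Lam K n a ⊗[K] Lam K n b :=
  (TensorProduct.congr (ecast K n (by omega : (a-k) + k = a))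
      (ecast K n (by omega : k + (b-k) = b))).toLinearMap
    ∘ₗ pairMul K n mf (a-k) k k (b-k)
    ∘ₗ (TensorProduct.map
        ((Df (a-k) k) ∘ₗ (ecast K n (by omega : a = (a-k) + k)).toLinearMap)
        ((Df k (b-k)) ∘ₗ (ecast K n (by omega : b = k + (b-k))).toLinearMap))

/-- The map `ψ_k = C(b,k)·1 - φ_k : Λ^a ⊗ Λ^b → Λ^a ⊗ Λ^b`. -/
def psiSmall (a b k : ℕ) (hka : k ≤ a) (hkb : k ≤ b) :
    Lam K n a ⊗[K] Lam K n b →ₗ[K] Lam K n a ⊗[K] Lam K n b :=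
  (Nat.choose b k : K) • LinearMap.id - phiSmall K n mf Df a b k hka hkb

/-- The map `β_k = (m ⊗ m) ∘ (1 ⊗ τ ⊗ 1) ∘ (Δ_{a-k,k} ⊗ 1 ⊗ 1) : Λ^a ⊗ (Λ^k ⊗ Λ^{b-k}) → Λ^a ⊗ Λ^b`. -/
def betaMap (a b k : ℕ) (hka : k ≤ a) (hkb : k ≤ b) :
    Lam K n a ⊗[K] (Lam K n k ⊗[K] Lam K n (b-k)) →ₗ[K] Lam K n a ⊗[K] Lam K n b :=
  (TensorProduct.congr (ecast K n (by omega : (a-k) + k = a))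
      (ecast K n (by omega : k + (b-k) = b))).toLinearMap
    ∘ₗ pairMul K n mf (a-k) k k (b-k)
    ∘ₗ (TensorProduct.map
        ((Df (a-k) k) ∘ₗ (ecast K n (by omega : a = (a-k) + k)).toLinearMap)
        LinearMap.id)

/-- The map `γ_k : Λ^a ⊗ (Λ^k ⊗ Λ^{b-k}) → Λ^a ⊗ Λ^b`,
`γ_k(x ⊗ y ⊗ z) = x ⊗ (y ∧ z) - β_k(x ⊗ y ⊗ z)`. -/
def gammaMap (a b k : ℕ) (hka : k ≤ a) (hkb : k ≤ b) :
    Lam K n a ⊗[K] (Lam K n k ⊗[K] Lam K n (b-k)) →ₗ[K] Lam K n a ⊗[K] Lam K n b :=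
  (TensorProduct.map LinearMap.id
      ((ecast K n (by omega : k + (b-k) = b)).toLinearMap ∘ₗ mf k (b-k)))
    - betaMap K n mf Df a b k hka hkb

/-- The quantity `d_k(a,b,t)` (for the given `i`), from Lemma 5.3 of the paper. -/
def dInt (a b k i t : ℕ) : ℤ :=
  1 - ∑ j ∈ Finset.Icc (i - min (b-k) i) t,
        (-1:ℤ)^j * ((a-k+j).choose (a-k) : ℤ) * ((b-k+t-i).choose (t-j) : ℤ)

end MMS

/-!
On `Λ ⊗ Λ`, let `R_y` be right multiplication by `y` on the first factor, `L_y` left multiplication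
by `y` on the second, and `T` the operator moving one vector across the tensor sign. The map `θ_1`
is the restriction of `T`, and iterating `T` enumerates shuffles with multiplicity, so that
`k! • β_k (x ⊗ y ⊗ z) = R_y (T ^ k (x ⊗ z))`. The claim becomes `R_y T ^ k ≡ k! • L_y` modulo the
image of `T`. It follows by induction on `k`, peeling off the first vector `v` of `y`, from the
relations `T R_v = L_v - R_v T` and `T L_v = -L_v T`: they give
`R_v T ^ (k + 1) = ±((k + 1) • T ^ k L_v - T ^ k (T R_v))`, where the inductive hypothesis
replaces `R_{y'} T ^ k` by `k! • L_{y'}` in both terms, and `L_{y'} T = ±T L_{y'}` puts the second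
one in the image of `T`.
-/

namespace MMS

section Transfer

variable {R M : Type*} [CommRing R] [AddCommGroup M] [Module R M]

variable (R M) in
/-- The tensor square `Λ ⊗ Λ` of the exterior algebra of `M`. -/
abbrev TensorSq : Type _ := ExteriorAlgebra R M ⊗[R] ExteriorAlgebra R M

/-- Right multiplication by `y` on the first factor of `Λ ⊗ Λ`. -/
def mulRightFst : ExteriorAlgebra R M →ₗ[R] Module.End R (TensorSq R M) :=
  LinearMap.rTensorHom _ ∘ₗ (LinearMap.mul R (ExteriorAlgebra R M)).flip

/-- Left multiplication by `y` on the second factor of `Λ ⊗ Λ`. -/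
def mulLeftSnd : ExteriorAlgebra R M →ₐ[R] Module.End R (TensorSq R M) :=
  (Module.End.lTensorAlgHom R _ _).comp (Algebra.lmul R (ExteriorAlgebra R M))

@[simp]
lemma mulRightFst_tmul (x y z : ExteriorAlgebra R M) :
    mulRightFst y (x ⊗ₜ[R] z) = (x * y) ⊗ₜ z := rfl

@[simp]
lemma mulLeftSnd_tmul (x y z : ExteriorAlgebra R M) :
    mulLeftSnd y (x ⊗ₜ[R] z) = x ⊗ₜ (y * z) := rfl

@[simp]
lemma mulRightFst_one : mulRightFst (1 : ExteriorAlgebra R M) = 1 := by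
  ext x z; simp

lemma mulRightFst_mul (x y : ExteriorAlgebra R M) :
    mulRightFst (x * y) = mulRightFst y * mulRightFst x :=
  TensorProduct.ext' fun _ _ ↦ by simp [mul_assoc]

lemma commute_mulRightFst_mulLeftSnd (x y : ExteriorAlgebra R M) :
    Commute (mulRightFst x) (mulLeftSnd y) :=
  TensorProduct.ext' fun _ _ ↦ by simp

/-- One step of the recursion defining `transfer`: it carries `(x ⊗ z, transfer (x ⊗ z))` to
`((x * v) ⊗ z, transfer ((x * v) ⊗ z))`. -/
def transferStep : M →ₗ[R] TensorSq R M × TensorSq R M →ₗ[R] TensorSq R M × TensorSq R M :=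
  LinearMap.mk₂ R
    (fun v t ↦ (mulRightFst (.ι R v) t.1, mulLeftSnd (.ι R v) t.1 - mulRightFst (.ι R v) t.2))
    (fun _ _ _ ↦ Prod.ext (by simp) (by simp [add_sub_add_comm]))
    (fun _ _ _ ↦ by simp [smul_sub])
    (fun _ _ _ ↦ Prod.ext (by simp) (by simp [add_sub_add_comm]))
    (fun _ _ _ ↦ by simp [smul_sub])

lemma transferStep_apply (v : M) (t : TensorSq R M × TensorSq R M) :
    transferStep v t =
      (mulRightFst (.ι R v) t.1, mulLeftSnd (.ι R v) t.1 - mulRightFst (.ι R v) t.2) := rfl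

lemma mulRightFst_ι_mul_self (v : M) :
    mulRightFst (.ι R v) * mulRightFst (.ι R v) = 0 := by
  rw [← mulRightFst_mul, ExteriorAlgebra.ι_sq_zero, map_zero]

lemma transferStep_transferStep (v : M) (t : TensorSq R M × TensorSq R M) :
    transferStep v (transferStep v t) = (0 : QuadraticForm R M) v • t := by
  have hsq (s : TensorSq R M) : mulRightFst (.ι R v) (mulRightFst (.ι R v) s) = 0 :=
    LinearMap.congr_fun (mulRightFst_ι_mul_self v) s
  have hcomm (s : TensorSq R M) : mulRightFst (.ι R v) (mulLeftSnd (.ι R v) s) =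
      mulLeftSnd (.ι R v) (mulRightFst (.ι R v) s) :=
    LinearMap.congr_fun (commute_mulRightFst_mulLeftSnd _ _) s
  simp [transferStep_apply, hsq, hcomm]

/-- The pair `(x ⊗ z, transfer (x ⊗ z))`, as a linear function of `z` and `x`. -/
def transferPair : ExteriorAlgebra R M →ₗ[R] ExteriorAlgebra R M →ₗ[R]
    TensorSq R M × TensorSq R M :=
  ((CliffordAlgebra.foldl 0 transferStep transferStep_transferStep) ∘ₗ
    LinearMap.inl R _ _ ∘ₗ TensorProduct.mk R _ _ 1).flip

/-- The operator on `Λ ⊗ Λ` moving one vector from the right end of the first factor to the left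
end of the second: `(v₁ ⋯ vₚ) ⊗ z ↦ ∑ᵢ (-1)^(p-i) (v₁ ⋯ v̂ᵢ ⋯ vₚ) ⊗ vᵢ z`. It is defined by
recursion on the first factor, see `transfer_mul_mulRightFst`. -/
def transfer : Module.End R (TensorSq R M) :=
  TensorProduct.lift (transferPair.compr₂ (LinearMap.snd R _ _))

lemma transferPair_one (z : ExteriorAlgebra R M) : transferPair 1 z = (1 ⊗ₜ[R] z, 0) :=
  CliffordAlgebra.foldl_one 0 _ transferStep_transferStep _

lemma transferPair_mul_ι (x z : ExteriorAlgebra R M) (v : M) :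
    transferPair (x * .ι R v) z = transferStep v (transferPair x z) :=
  (CliffordAlgebra.foldl_mul 0 _ transferStep_transferStep _ x _).trans
    (CliffordAlgebra.foldl_ι 0 _ transferStep_transferStep _ v)

lemma transferPair_apply (x z : ExteriorAlgebra R M) :
    transferPair x z = (x ⊗ₜ[R] z, transfer (x ⊗ₜ[R] z)) := by
  refine Prod.ext ?_ rfl
  induction x using CliffordAlgebra.right_induction with
  | algebraMap r =>
    simp [Algebra.algebraMap_eq_smul_one, transferPair_one, TensorProduct.smul_tmul']
  | add x y hx hy => simp [hx, hy, TensorProduct.add_tmul]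
  | mul_ι v x hx =>
    exact (congrArg Prod.fst (transferPair_mul_ι x z v)).trans (by simp [transferStep_apply, hx])

@[simp]
lemma transfer_one_tmul (z : ExteriorAlgebra R M) :
    transfer ((1 : ExteriorAlgebra R M) ⊗ₜ[R] z) = 0 :=
  congrArg Prod.snd (transferPair_one z)

lemma transfer_mul_mulRightFst (v : M) :
    transfer * mulRightFst (.ι R v) =
      mulLeftSnd (.ι R v) - mulRightFst (.ι R v) * transfer := by
  refine TensorProduct.ext' fun x z ↦ ?_
  have h := congrArg Prod.snd (transferPair_mul_ι x z v)
  rwa [transferStep_apply, transferPair_apply, transferPair_apply] at h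

lemma mulLeftSnd_ι_mul_ι (v w : M) :
    mulLeftSnd (.ι R v) * mulLeftSnd (.ι R w) = - (mulLeftSnd (.ι R w) * mulLeftSnd (.ι R v)) := by
  rw [eq_neg_iff_add_eq_zero, ← map_mul mulLeftSnd, ← map_mul mulLeftSnd, ← map_add,
    ExteriorAlgebra.ι_add_mul_swap, map_zero]

lemma eq_zero_of_mul_mulRightFst_ι_eq_neg {A : Module.End R (TensorSq R M)}
    (hone : ∀ z : ExteriorAlgebra R M, A (1 ⊗ₜ z) = 0)
    (hι : ∀ v : M, A * mulRightFst (.ι R v) = -(mulRightFst (.ι R v) * A)) : A = 0 := by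
  refine TensorProduct.ext' fun x z ↦ ?_
  induction x using CliffordAlgebra.right_induction with
  | algebraMap r => simp [Algebra.algebraMap_eq_smul_one, ← TensorProduct.smul_tmul', hone]
  | add x y hx hy => rw [TensorProduct.add_tmul, map_add, map_add, hx, hy]
  | mul_ι v x hx => simpa [hx] using LinearMap.congr_fun (hι v) (x ⊗ₜ z)

lemma transfer_mul_mulLeftSnd_ι (w : M) :
    transfer * mulLeftSnd (.ι R w) = -(mulLeftSnd (.ι R w) * transfer) := by
  rw [eq_neg_iff_add_eq_zero]
  refine eq_zero_of_mul_mulRightFst_ι_eq_neg (fun z ↦ by simp) fun v ↦ ?_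
  have hRL := (commute_mulRightFst_mulLeftSnd (.ι R v) (.ι R w)).eq
  calc (transfer * mulLeftSnd (.ι R w) + mulLeftSnd (.ι R w) * transfer) * mulRightFst (.ι R v)
    _ = transfer * mulRightFst (.ι R v) * mulLeftSnd (.ι R w) +
          mulLeftSnd (.ι R w) * (transfer * mulRightFst (.ι R v)) := by
      rw [add_mul, mul_assoc, mul_assoc, mul_assoc, hRL]
    _ = mulLeftSnd (.ι R v) * mulLeftSnd (.ι R w) + mulLeftSnd (.ι R w) * mulLeftSnd (.ι R v) -
          mulRightFst (.ι R v) * (transfer * mulLeftSnd (.ι R w)) -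
          mulLeftSnd (.ι R w) * mulRightFst (.ι R v) * transfer := by
      rw [transfer_mul_mulRightFst]; noncomm_ring
    _ = -(mulRightFst (.ι R v) *
          (transfer * mulLeftSnd (.ι R w) + mulLeftSnd (.ι R w) * transfer)) := by
      rw [mulLeftSnd_ι_mul_ι, ← hRL]; noncomm_ring

lemma pow_succ_mul_of_mul_eq_sub {S : Type*} [Ring S] {t r l : S} (hr : t * r = l - r * t)
    (hl : t * l = -(l * t)) (q : ℕ) :
    t ^ (q + 1) * r = (q + 1) • (t ^ q * l) + (-1 : ℤ) ^ (q + 1) • (r * t ^ (q + 1)) := by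
  have hlpow (m : ℕ) : l * t ^ m = (-1 : ℤ) ^ m • (t ^ m * l) := by
    have h : l * t ^ m = (-t) ^ m * l := SemiconjBy.pow_right (by simp [SemiconjBy, hl]) m
    rw [h, neg_pow, zsmul_eq_mul, mul_assoc]
    push_cast
    rfl
  induction q with
  | zero => simp [hr, sub_eq_add_neg]
  | succ q ih =>
    calc t ^ (q + 2) * r
      _ = t * (t ^ (q + 1) * r) := by rw [pow_succ' t (q + 1), mul_assoc]
      _ = (q + 1) • (t ^ (q + 1) * l) +
            (-1 : ℤ) ^ (q + 1) • (l * t ^ (q + 1) - r * t ^ (q + 2)) := by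
        rw [ih, mul_add, mul_smul_comm, mul_smul_comm, ← mul_assoc t, ← mul_assoc t, hr, sub_mul,
          mul_assoc r, ← pow_succ', ← pow_succ']
      _ = (q + 2) • (t ^ (q + 1) * l) + (-1 : ℤ) ^ (q + 2) • (r * t ^ (q + 2)) := by
        rw [hlpow, smul_sub, smul_smul, ← pow_add, (Even.add_self _).neg_one_pow, one_smul,
          succ_nsmul _ (q + 1), pow_succ (-1 : ℤ) (q + 1), mul_neg_one, neg_smul]
        abel

lemma transfer_pow_succ_mul_mulRightFst (v : M) (q : ℕ) :
    transfer ^ (q + 1) * mulRightFst (.ι R v) =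
      (q + 1) • (transfer ^ q * mulLeftSnd (.ι R v)) +
        (-1 : ℤ) ^ (q + 1) • (mulRightFst (.ι R v) * transfer ^ (q + 1)) :=
  pow_succ_mul_of_mul_eq_sub (transfer_mul_mulRightFst v) (transfer_mul_mulLeftSnd_ι v) q

lemma mulRightFst_mul_transfer_pow_succ (v : M) (q : ℕ) :
    mulRightFst (.ι R v) * transfer ^ (q + 1) =
      (-1 : ℤ) ^ q • ((q + 1) • (transfer ^ q * mulLeftSnd (.ι R v)) -
        transfer ^ q * (transfer * mulRightFst (.ι R v))) := by
  rw [← mul_assoc, ← pow_succ, transfer_pow_succ_mul_mulRightFst, sub_add_cancel_left, smul_neg,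
    smul_smul, ← neg_smul, pow_succ (-1 : ℤ) q, ← mul_assoc, ← pow_add,
    (Even.add_self q).neg_one_pow, one_mul, neg_neg, one_smul]

lemma mul_map_eq_of_mem_exteriorPower {S : Type*} [Ring S] [Algebra R S]
    (f : ExteriorAlgebra R M →ₐ[R] S) {s : S} (hs : ∀ v : M, s * f (.ι R v) = -(f (.ι R v) * s))
    {k : ℕ} {y : ExteriorAlgebra R M} (hy : y ∈ ⋀[R]^k M) :
    s * f y = (-1 : ℤ) ^ k • (f y * s) := by
  induction k generalizing y with
  | zero =>
    obtain ⟨r, rfl⟩ := Submodule.mem_one.1 (by simpa using hy)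
    simp [Algebra.commutes]
  | succ k ih =>
    rw [ExteriorAlgebra.exteriorPower, pow_succ'] at hy
    refine Submodule.mul_induction_on hy ?_ fun y y' hy hy' ↦ ?_
    · rintro _ ⟨w, rfl⟩ y hy
      rw [map_mul, ← mul_assoc, hs, neg_mul, mul_assoc, ih hy, mul_smul_comm, ← mul_assoc,
        pow_succ', neg_one_mul, neg_smul]
    · rw [map_add, mul_add, hy, hy', add_mul, smul_add]

lemma ι_mul_eq_of_mem_exteriorPower (v : M) {k : ℕ} {y : ExteriorAlgebra R M} (hy : y ∈ ⋀[R]^k M) :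
    .ι R v * y = (-1 : ℤ) ^ k • (y * .ι R v) :=
  mul_map_eq_of_mem_exteriorPower (AlgHom.id R _)
    (fun w ↦ eq_neg_of_add_eq_zero_left (ExteriorAlgebra.ι_add_mul_swap v w)) hy

lemma mulLeftSnd_mul_transfer {k : ℕ} {y : ExteriorAlgebra R M} (hy : y ∈ ⋀[R]^k M) :
    mulLeftSnd y * transfer = (-1 : ℤ) ^ k • (transfer * mulLeftSnd y) := by
  rw [mul_map_eq_of_mem_exteriorPower mulLeftSnd transfer_mul_mulLeftSnd_ι hy, smul_smul,
    ← pow_add, (Even.add_self k).neg_one_pow, one_smul]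

variable (R M) in
/-- The bihomogeneous component `Λ^p ⊗ Λ^q` of `Λ ⊗ Λ`, as a submodule. -/
def bideg (p q : ℕ) : Submodule R (TensorSq R M) :=
  Submodule.map₂ (TensorProduct.mk R _ _) (⋀[R]^p M) (⋀[R]^q M)

lemma tmul_mem_bideg {p q : ℕ} {x z : ExteriorAlgebra R M} (hx : x ∈ ⋀[R]^p M)
    (hz : z ∈ ⋀[R]^q M) : x ⊗ₜ z ∈ bideg R M p q :=
  Submodule.apply_mem_map₂ _ hx hz

lemma mulRightFst_mem_bideg {p q k : ℕ} {y : ExteriorAlgebra R M} {t : TensorSq R M}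
    (hy : y ∈ ⋀[R]^k M) (ht : t ∈ bideg R M p q) : mulRightFst y t ∈ bideg R M (p + k) q := by
  suffices bideg R M p q ≤ (bideg R M (p + k) q).comap (mulRightFst y) from this ht
  exact Submodule.map₂_le.2 fun x hx z hz ↦ tmul_mem_bideg (SetLike.mul_mem_graded hx hy) hz

lemma mulLeftSnd_mem_bideg {p q k : ℕ} {y : ExteriorAlgebra R M} {t : TensorSq R M}
    (hy : y ∈ ⋀[R]^k M) (ht : t ∈ bideg R M p q) : mulLeftSnd y t ∈ bideg R M p (k + q) := by
  suffices bideg R M p q ≤ (bideg R M p (k + q)).comap (mulLeftSnd y) from this ht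
  exact Submodule.map₂_le.2 fun x hx z hz ↦ tmul_mem_bideg hx (SetLike.mul_mem_graded hy hz)

lemma ι_mem_exteriorPower_one (v : M) : .ι R v ∈ ⋀[R]^1 M := by
  simp [ExteriorAlgebra.exteriorPower]

lemma transfer_pow_tmul_eq_zero {p q : ℕ} (hpq : p < q) {x : ExteriorAlgebra R M}
    (hx : x ∈ ⋀[R]^p M) (z : ExteriorAlgebra R M) : (transfer ^ q) (x ⊗ₜ[R] z) = 0 := by
  obtain ⟨q, rfl⟩ := Nat.exists_eq_succ_of_ne_zero (Nat.ne_zero_of_lt hpq)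
  induction p generalizing q x z with
  | zero =>
    obtain ⟨r, rfl⟩ := Submodule.mem_one.1 (by simpa using hx)
    simp [pow_succ, Algebra.algebraMap_eq_smul_one, ← TensorProduct.smul_tmul']
  | succ p ih =>
    obtain ⟨q, rfl⟩ := Nat.exists_eq_succ_of_ne_zero (show q ≠ 0 by lia)
    rw [ExteriorAlgebra.exteriorPower, pow_succ] at hx
    refine Submodule.mul_induction_on hx ?_ fun x x' hx hx' ↦ ?_
    · rintro x hx _ ⟨v, rfl⟩
      have h := LinearMap.congr_fun (transfer_pow_succ_mul_mulRightFst v (q + 1)) (x ⊗ₜ z)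
      simpa [ih hx _ _ (Nat.lt_of_succ_lt_succ hpq), ih hx _ (q + 1) (by lia)] using h
    · rw [TensorProduct.add_tmul, map_add, hx, hx', add_zero]

lemma transfer_mul_ι_tmul (x z : ExteriorAlgebra R M) (v : M) :
    transfer ((x * .ι R v) ⊗ₜ z) =
      x ⊗ₜ[R] (.ι R v * z) - mulRightFst (.ι R v) (transfer (x ⊗ₜ z)) :=
  LinearMap.congr_fun (transfer_mul_mulRightFst v) (x ⊗ₜ z)

lemma transfer_tmul_mem_bideg {p q : ℕ} {x z : ExteriorAlgebra R M} (hx : x ∈ ⋀[R]^(p + 1) M)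
    (hz : z ∈ ⋀[R]^q M) : transfer (x ⊗ₜ z) ∈ bideg R M p (q + 1) := by
  rw [ExteriorAlgebra.exteriorPower, pow_succ] at hx
  refine Submodule.mul_induction_on hx ?_ fun x x' hx hx' ↦ ?_
  · rintro x hx _ ⟨v, rfl⟩
    have hv : .ι R v ∈ ⋀[R]^1 M := ι_mem_exteriorPower_one v
    rw [transfer_mul_ι_tmul]
    refine sub_mem (tmul_mem_bideg hx (add_comm 1 q ▸ SetLike.mul_mem_graded hv hz)) ?_
    cases p with
    | zero =>
      rw [← pow_one (transfer (R := R)), transfer_pow_tmul_eq_zero zero_lt_one hx, map_zero]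
      exact zero_mem _
    | succ p => exact mulRightFst_mem_bideg hv (transfer_tmul_mem_bideg hx hz)
  · rw [TensorProduct.add_tmul, map_add]
    exact add_mem hx hx'

lemma transfer_mem_bideg {p q : ℕ} {t : TensorSq R M} (ht : t ∈ bideg R M (p + 1) q) :
    transfer t ∈ bideg R M p (q + 1) := by
  suffices bideg R M (p + 1) q ≤ (bideg R M p (q + 1)).comap transfer from this ht
  exact Submodule.map₂_le.2 fun x hx z hz ↦ transfer_tmul_mem_bideg hx hz

lemma mulRightFst_transfer_pow_smodEq {k : ℕ} {y : ExteriorAlgebra R M} (hy : y ∈ ⋀[R]^k M)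
    {p q r : ℕ} (hr : q + k = r + 1) {t : TensorSq R M} (ht : t ∈ bideg R M p q) :
    mulRightFst y ((transfer ^ k) t) ≡ k.factorial • mulLeftSnd y t
      [SMOD (bideg R M (p + 1) r).map transfer] := by
  induction k generalizing y q t with
  | zero =>
    obtain ⟨c, rfl⟩ := Submodule.mem_one.1 (by simpa using hy)
    simp [Algebra.algebraMap_eq_smul_one]
  | succ k ih =>
    rw [ExteriorAlgebra.exteriorPower, pow_succ'] at hy
    refine Submodule.mul_induction_on hy ?_ fun y y' hy hy' ↦ by simpa using hy.add hy'
    rintro _ ⟨v, rfl⟩ y hy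
    have hv : .ι R v ∈ ⋀[R]^1 M := ι_mem_exteriorPower_one v
    have hLv := ih hy (by lia) (add_comm 1 q ▸ mulLeftSnd_mem_bideg hv ht)
    have hTRv := ih hy (by lia) (transfer_mem_bideg (mulRightFst_mem_bideg hv ht))
    have hvy : mulLeftSnd (.ι R v * y) t = (-1 : ℤ) ^ k • mulLeftSnd y (mulLeftSnd (.ι R v) t) := by
      rw [ι_mul_eq_of_mem_exteriorPower v hy, map_zsmul, map_mul]; rfl
    have hT : mulLeftSnd y (transfer (mulRightFst (.ι R v) t)) ∈
        (bideg R M (p + 1) r).map transfer := by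
      have hLRv := mulLeftSnd_mem_bideg hy (mulRightFst_mem_bideg hv ht)
      rw [show k + q = r by lia] at hLRv
      rw [← Module.End.mul_apply, mulLeftSnd_mul_transfer hy]
      exact zsmul_mem (Submodule.mem_map_of_mem hLRv) _
    calc mulRightFst (.ι R v * y) ((transfer ^ (k + 1)) t)
      _ = (-1 : ℤ) ^ k • ((k + 1) • mulRightFst y ((transfer ^ k) (mulLeftSnd (.ι R v) t)) -
            mulRightFst y ((transfer ^ k) (transfer (mulRightFst (.ι R v) t)))) := by
        rw [mulRightFst_mul, Module.End.mul_apply, ← Module.End.mul_apply (mulRightFst (.ι R v)),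
          mulRightFst_mul_transfer_pow_succ]
        simp only [LinearMap.smul_apply, LinearMap.sub_apply, Module.End.mul_apply, map_zsmul,
          map_nsmul, map_sub]
      _ ≡ (-1 : ℤ) ^ k • ((k + 1) • k.factorial • mulLeftSnd y (mulLeftSnd (.ι R v) t) - 0)
            [SMOD (bideg R M (p + 1) r).map transfer] :=
        ((hLv.nsmul _).sub (hTRv.trans (SModEq.zero.2 (nsmul_mem hT _)))).zsmul _
      _ = (k + 1).factorial • mulLeftSnd (.ι R v * y) t := by
        rw [hvy, sub_zero, smul_smul, ← Nat.factorial_succ, smul_comm]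

end Transfer

section Shuffle

/-- `σ` is a `(p, N - p)`-shuffle: it is increasing on the first `p` indices and on the remaining
ones, i.e. on pairs of indices lying in the same block. -/
def IsShuffle {N : ℕ} (p : ℕ) (σ : Equiv.Perm (Fin N)) : Prop :=
  ∀ i j : Fin N, i < j → ((i : ℕ) < p ↔ (j : ℕ) < p) → σ i < σ j

instance {N : ℕ} (p : ℕ) : DecidablePred (IsShuffle (N := N) p) := fun σ ↦
  inferInstanceAs (Decidable (∀ i j : Fin N, i < j → ((i : ℕ) < p ↔ (j : ℕ) < p) → σ i < σ j))

lemma mem_shuffles {p q : ℕ} {σ : Equiv.Perm (Fin (p + q))} :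
    σ ∈ shuffles p q ↔ IsShuffle p σ := by
  rw [shuffles, Finset.mem_filter_univ]
  refine ⟨fun ⟨hl, hr⟩ i j hij h ↦ ?_,
    fun hσ ↦ ⟨fun i j hij hj ↦ hσ i j hij (by lia), fun i j hij hi ↦ hσ i j hij (by lia)⟩⟩
  by_cases hj : (j : ℕ) < p
  · exact hl i j hij hj
  · exact hr i j hij (by lia)

lemma isShuffle_iff_eq_one {N p : ℕ} (hp : p = 0 ∨ p = N) {σ : Equiv.Perm (Fin N)} :
    IsShuffle p σ ↔ σ = 1 := by
  refine ⟨fun h ↦ DFunLike.coe_injective ((StrictMono.range_inj (fun i j hij ↦ h i j hij (by lia))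
    strictMono_id).1 (by simp [σ.surjective.range_eq])), ?_⟩
  rintro rfl i j hij -
  exact hij

/-- The permutation `τ` of `N + 1` indices with `τ i = N` that agrees with `σ` on the other
indices, renumbered in increasing order. -/
def extendAt {N : ℕ} (i : Fin (N + 1)) (σ : Equiv.Perm (Fin N)) : Equiv.Perm (Fin (N + 1)) :=
  finSuccEquivLast.permCongr.symm σ.optionCongr * (Fin.cycleIcc i (Fin.last N))⁻¹

variable {N : ℕ} {i : Fin (N + 1)} {σ : Equiv.Perm (Fin N)} {τ : Equiv.Perm (Fin (N + 1))}

@[simp]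
lemma extendAt_self : extendAt i σ i = Fin.last N := by
  have h : (Fin.cycleIcc i (Fin.last N)).symm i = Fin.last N := by
    rw [Equiv.symm_apply_eq, Fin.cycleIcc_of_last (Fin.le_last i)]
  simp [extendAt, h]

@[simp]
lemma extendAt_succAbove (j : Fin N) : extendAt i σ (i.succAbove j) = (σ j).castSucc := by
  have h : (Fin.cycleIcc i (Fin.last N)).symm (i.succAbove j) = j.castSucc := by
    rw [Equiv.symm_apply_eq, ← Fin.cycleIcc_comp_succAbove i _ (Fin.le_last i)]
    simp
  simp [extendAt, h]

lemma sign_extendAt :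
    Equiv.Perm.sign (extendAt i σ) = (-1) ^ (N - i : ℕ) * Equiv.Perm.sign σ := by
  simp [extendAt, Fin.sign_cycleIcc_of_le (Fin.le_last i), mul_comm]

lemma extendAt_injective (i : Fin (N + 1)) : Function.Injective (extendAt i) :=
  fun _ _ h ↦ Equiv.optionCongr_injective (Equiv.injective _ (mul_right_cancel h))

lemma exists_extendAt_eq (hτ : τ i = Fin.last N) : ∃ σ, extendAt i σ = τ := by
  set e := finSuccEquivLast.permCongr (τ * Fin.cycleIcc i (Fin.last N)) with he
  have hnone : e none = none := by simp [he, Fin.cycleIcc_of_last (Fin.le_last i), hτ]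
  refine ⟨Equiv.removeNone e, ?_⟩
  rw [extendAt, map_equiv_removeNone, hnone, Equiv.swap_self, mul_inv_eq_iff_eq_mul,
    ← Equiv.Perm.one_def, one_mul, he, Equiv.symm_apply_apply]

lemma not_same_block_of_isShuffle {p : ℕ} (hτ : IsShuffle p τ) (hlast : τ i = Fin.last N)
    {j : Fin (N + 1)} (hij : i < j) : ¬((i : ℕ) < p ↔ (j : ℕ) < p) :=
  fun h ↦ (hlast ▸ hτ i j hij h).not_ge (Fin.le_last _)

lemma isShuffle_extendAt_iff {p p' : ℕ} (hp : ∀ j, (i.succAbove j : ℕ) < p' ↔ (j : ℕ) < p)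
    (hi : ∀ j, i < j → ¬((i : ℕ) < p' ↔ (j : ℕ) < p')) :
    IsShuffle p' (extendAt i σ) ↔ IsShuffle p σ := by
  refine ⟨fun h j k hjk hb ↦ ?_, fun h j k hjk hb ↦ ?_⟩
  · simpa using h (i.succAbove j) (i.succAbove k) (by simpa) (by rwa [hp, hp])
  · obtain rfl | ⟨j, rfl⟩ := i.eq_self_or_eq_succAbove j
    · exact absurd hb (hi k hjk)
    obtain rfl | ⟨k, rfl⟩ := i.eq_self_or_eq_succAbove k
    · simp
    · simpa using h j k (by simpa using hjk) (by rwa [hp, hp] at hb)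

lemma sum_isShuffle_apply_eq_last {A : Type*} [AddCommMonoid A] {p p' : ℕ}
    (hp : ∀ j, (i.succAbove j : ℕ) < p' ↔ (j : ℕ) < p)
    (hi : ∀ j, i < j → ¬((i : ℕ) < p' ↔ (j : ℕ) < p')) (f : Equiv.Perm (Fin (N + 1)) → A) :
    ∑ τ with IsShuffle p' τ ∧ τ i = Fin.last N, f τ = ∑ σ with IsShuffle p σ, f (extendAt i σ) := by
  symm
  refine Finset.sum_nbij (extendAt i) ?_ (extendAt_injective i).injOn ?_ fun _ _ ↦ rfl
  · simp [isShuffle_extendAt_iff hp hi]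
  · intro τ hτ
    obtain ⟨hshuffle, hlast⟩ := Finset.mem_filter_univ _ |>.1 hτ
    obtain ⟨σ, rfl⟩ := exists_extendAt_eq hlast
    exact ⟨σ, by simpa [isShuffle_extendAt_iff hp hi] using hshuffle, rfl⟩

lemma apply_last_ne_last_iff_of_isShuffle {p : ℕ} (hp : p < N) (hτ : IsShuffle (p + 1) τ) :
    τ (Fin.last N) ≠ Fin.last N ↔ τ ⟨p, by lia⟩ = Fin.last N := by
  refine ⟨fun h ↦ ?_, fun h hlast ↦ ?_⟩
  · obtain ⟨i, hi⟩ := τ.surjective (Fin.last N)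
    obtain ⟨i, rfl⟩ := i.exists_castSucc_eq.2 fun hlast ↦ h (hlast ▸ hi)
    have hblock := not_same_block_of_isShuffle hτ hi (j := i.succ) i.castSucc_lt_succ
    rw [← hi]
    congr 1
    ext
    simp only [Fin.val_castSucc, Fin.val_succ] at hblock ⊢
    lia
  · exact hp.ne (congrArg Fin.val (τ.injective (h.trans hlast.symm)))

lemma sum_isShuffle_succ {A : Type*} [AddCommMonoid A] {p : ℕ} (hp : p < N)
    (f : Equiv.Perm (Fin (N + 1)) → A) :
    ∑ τ with IsShuffle (p + 1) τ, f τ =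
      ∑ σ with IsShuffle (p + 1) σ, f (extendAt (Fin.last N) σ) +
        ∑ σ with IsShuffle p σ, f (extendAt ⟨p, by lia⟩ σ) := by
  rw [← Finset.sum_filter_add_sum_filter_not _ (fun τ ↦ τ (Fin.last N) = Fin.last N),
    Finset.filter_filter, Finset.filter_filter]
  congr 1
  · refine sum_isShuffle_apply_eq_last (fun j ↦ ?_) (fun j hj ↦ ?_) f
    · simp
    · exact absurd hj (Fin.le_last j).not_gt
  · rw [Finset.filter_congr fun τ _ ↦
      and_congr_right fun hτ ↦ apply_last_ne_last_iff_of_isShuffle hp hτ]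
    refine sum_isShuffle_apply_eq_last (fun j ↦ ?_) (fun j hj ↦ ?_) f
    · simp only [Fin.succAbove, Fin.lt_def, Fin.val_castSucc]
      split_ifs with hj
      · rw [Fin.val_castSucc]; lia
      · rw [Fin.val_succ]; lia
    · have hpj : p < (j : ℕ) := hj
      lia

end Shuffle

section ShuffleSum

variable {R M : Type*} [CommRing R] [AddCommGroup M] [Module R M] {p q N : ℕ}

/-- The tensor `(w₁ ⋯ w_p) ⊗ (w_(p+1) ⋯ w_N) z`, for `N = p + q`. -/
def splitTmul (h : p + q = N) (w : Fin N → M) (z : ExteriorAlgebra R M) : TensorSq R M :=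
  ExteriorAlgebra.ιMulti R p (fun i ↦ w (Fin.cast h (Fin.castAdd q i))) ⊗ₜ
    (ExteriorAlgebra.ιMulti R q (fun i ↦ w (Fin.cast h (Fin.natAdd p i))) * z)

/-- The image of `Δ_{p,q} (u₁ ⋯ u_N)`, for `N = p + q`, under `x ⊗ y ↦ x ⊗ y z`. -/
def shuffleSum (h : p + q = N) (u : Fin N → M) (z : ExteriorAlgebra R M) : TensorSq R M :=
  ∑ σ : Equiv.Perm (Fin N) with IsShuffle p σ, (Equiv.Perm.sign σ : ℤ) • splitTmul h (u ∘ σ) z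

lemma shuffleSum_eq_splitTmul (h : p + q = N) (hpq : p = 0 ∨ q = 0) (u : Fin N → M)
    (z : ExteriorAlgebra R M) : shuffleSum h u z = splitTmul h u z := by
  simp only [shuffleSum, isShuffle_iff_eq_one (show p = 0 ∨ p = N by lia)]
  rw [Finset.filter_eq' Finset.univ, if_pos (Finset.mem_univ 1), Finset.sum_singleton,
    Equiv.Perm.sign_one, Units.val_one, one_smul]
  rfl

lemma ιMulti_succ_last (w : Fin (N + 1) → M) :
    ExteriorAlgebra.ιMulti R (N + 1) w =
      ExteriorAlgebra.ιMulti R N (fun i ↦ w i.castSucc) * .ι R (w (Fin.last N)) := by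
  simp only [ExteriorAlgebra.ιMulti_apply, List.ofFn_succ', List.concat_eq_append,
    List.prod_append, List.prod_singleton]

lemma splitTmul_succ_right (h : p + q = N) (w : Fin (N + 1) → M) (z : ExteriorAlgebra R M) :
    splitTmul (congrArg (· + 1) h : p + (q + 1) = N + 1) w z =
      splitTmul h (fun i ↦ w i.castSucc) (.ι R (w (Fin.last N)) * z) := by
  subst h
  rw [splitTmul, ιMulti_succ_last, mul_assoc]
  rfl

lemma splitTmul_succ_left (h : p + 1 + q = N + 1) (w : Fin (N + 1) → M) (z : ExteriorAlgebra R M) :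
    splitTmul h w z = mulRightFst (.ι R (w ⟨p, by lia⟩))
      (splitTmul (show p + q = N by lia) (fun j ↦ w (Fin.succAbove ⟨p, by lia⟩ j)) z) := by
  have hpq : p + q = N := by lia
  have hl (i : Fin p) : Fin.succAbove ⟨p, by lia⟩ (Fin.cast hpq (Fin.castAdd q i)) =
      Fin.cast h (Fin.castAdd q i.castSucc) := by
    rw [Fin.succAbove_of_castSucc_lt _ _ (by simp [Fin.lt_def])]; rfl
  have hr (i : Fin q) : Fin.succAbove ⟨p, by lia⟩ (Fin.cast hpq (Fin.natAdd p i)) =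
      Fin.cast h (Fin.natAdd (p + 1) i) := by
    rw [Fin.succAbove_of_le_castSucc _ _ (by simp [Fin.le_def])]
    ext
    simp only [Fin.val_succ, Fin.val_cast, Fin.val_natAdd]
    lia
  rw [splitTmul, ιMulti_succ_last, splitTmul, mulRightFst_tmul]
  simp only [hl, hr]
  rfl

lemma shuffleSum_succ_succ (h : p + 1 + q = N) (u : Fin (N + 1) → M) (z : ExteriorAlgebra R M) :
    shuffleSum (congrArg (· + 1) h : p + 1 + (q + 1) = N + 1) u z =
      shuffleSum h (fun i ↦ u i.castSucc) (.ι R (u (Fin.last N)) * z) +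
      (-1 : ℤ) ^ (q + 1) • mulRightFst (.ι R (u (Fin.last N)))
        (shuffleSum (show p + (q + 1) = N by lia) (fun i ↦ u i.castSucc) z) := by
  rw [shuffleSum, sum_isShuffle_succ (by lia)]
  congr 1
  · refine Finset.sum_congr rfl fun σ _ ↦ ?_
    rw [splitTmul_succ_right h, sign_extendAt]
    simp only [Function.comp_def, extendAt_self, ← Fin.succAbove_last, extendAt_succAbove,
      Fin.val_last, tsub_self, pow_zero, one_mul]
  · rw [shuffleSum, map_sum, Finset.smul_sum]
    refine Finset.sum_congr rfl fun σ _ ↦ ?_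
    rw [splitTmul_succ_left, sign_extendAt, show N - p = q + 1 by lia]
    simp only [Function.comp_def, extendAt_self, extendAt_succAbove, Units.val_mul,
      Units.val_pow_eq_pow_val, Units.val_neg, Units.val_one, mul_smul, map_zsmul]

lemma transfer_pow_succ_ιMulti_succ_tmul (q : ℕ) (u : Fin (N + 1) → M)
    (z : ExteriorAlgebra R M) :
    (transfer ^ (q + 1)) (ExteriorAlgebra.ιMulti R (N + 1) u ⊗ₜ[R] z) =
      (q + 1) • (transfer ^ q)
        (ExteriorAlgebra.ιMulti R N (fun i ↦ u i.castSucc) ⊗ₜ (.ι R (u (Fin.last N)) * z)) +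
      (-1 : ℤ) ^ (q + 1) • mulRightFst (.ι R (u (Fin.last N)))
        ((transfer ^ (q + 1)) (ExteriorAlgebra.ιMulti R N (fun i ↦ u i.castSucc) ⊗ₜ z)) := by
  rw [ιMulti_succ_last]
  exact LinearMap.congr_fun (transfer_pow_succ_mul_mulRightFst (u (Fin.last N)) q)
    (ExteriorAlgebra.ιMulti R N (fun i ↦ u i.castSucc) ⊗ₜ z)

theorem factorial_smul_shuffleSum (h : p + q = N) (u : Fin N → M) (z : ExteriorAlgebra R M) :
    q.factorial • shuffleSum h u z = (transfer ^ q) (ExteriorAlgebra.ιMulti R N u ⊗ₜ[R] z) := by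
  induction N generalizing p q z with
  | zero =>
    obtain ⟨rfl, rfl⟩ : p = 0 ∧ q = 0 := by lia
    simp [shuffleSum_eq_splitTmul h (.inl rfl), splitTmul]
  | succ N ih =>
    rcases q with _ | q
    · obtain rfl : p = N + 1 := by lia
      simp [shuffleSum_eq_splitTmul rfl (.inr rfl), splitTmul]
    rw [transfer_pow_succ_ιMulti_succ_tmul]
    rcases p with _ | p
    · obtain rfl : N = q := by lia
      rw [shuffleSum_eq_splitTmul h (.inl rfl), splitTmul_succ_right (zero_add N),
        ← shuffleSum_eq_splitTmul (zero_add N) (.inl rfl), Nat.factorial_succ, mul_smul, ih,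
        transfer_pow_tmul_eq_zero N.lt_succ_self
          (ExteriorAlgebra.ιMulti_range R N (Set.mem_range_self _)),
        map_zero, smul_zero, add_zero]
    · rw [shuffleSum_succ_succ (by lia), smul_add, ← ih (by lia : p + (q + 1) = N),
        ← ih (by lia : p + 1 + q = N), ← mul_smul, ← Nat.factorial_succ, map_nsmul,
        smul_comm ((-1 : ℤ) ^ (q + 1))]

end ShuffleSum

section ExteriorPowers

variable {K : Type} [Field K] {n : ℕ}

lemma coe_ecast {p q : ℕ} (h : p = q) (x : Lam K n p) :
    (ecast K n h x : ExteriorAlgebra K (V K n)) = x := by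
  subst h
  rfl

lemma wedge_ext {p : ℕ} {N : Type*} [AddCommGroup N] [Module K N] {f g : Lam K n p →ₗ[K] N}
    (h : ∀ v, f (wedge K n v) = g (wedge K n v)) : f = g :=
  exteriorPower.linearMap_ext (AlternatingMap.ext h)

/-- The inclusion of `Λ^p ⊗ Λ^q` into the tensor square of the exterior algebra. -/
abbrev inclTensor (K : Type) [Field K] (n p q : ℕ) :
    Lam K n p ⊗[K] Lam K n q →ₗ[K] TensorSq K (V K n) :=
  TensorProduct.mapIncl (⋀[K]^p (V K n)) (⋀[K]^q (V K n))

lemma range_inclTensor (p q : ℕ) :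
    LinearMap.range (inclTensor K n p q) = bideg K (V K n) p q :=
  TensorProduct.range_mapIncl _ _

lemma inclTensor_injective (p q : ℕ) : Function.Injective (inclTensor K n p q) :=
  TensorProduct.map_injective_of_flat_flat _ _ (Submodule.subtype_injective _)
    (Submodule.subtype_injective _)

lemma inclTensor_congr_ecast {p p' q q' : ℕ} (hp : p = p') (hq : q = q')
    (t : Lam K n p ⊗[K] Lam K n q) :
    inclTensor K n p' q' (TensorProduct.congr (ecast K n hp) (ecast K n hq) t) =
      inclTensor K n p q t := by
  subst hp hq
  exact congrArg _ (LinearMap.congr_fun TensorProduct.map_id t)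

lemma coe_mulMap {p q : ℕ} {m : Lam K n p ⊗[K] Lam K n q →ₗ[K] Lam K n (p + q)}
    (hm : IsMulMap K n p q m) (x : Lam K n p) (y : Lam K n q) :
    (m (x ⊗ₜ y) : ExteriorAlgebra K (V K n)) = x * y := by
  suffices h : (TensorProduct.mk K _ _).compr₂ ((⋀[K]^(p + q) (V K n)).subtype ∘ₗ m) =
      (LinearMap.mul K (ExteriorAlgebra K (V K n))).compl₁₂ (⋀[K]^p (V K n)).subtype
        (⋀[K]^q (V K n)).subtype from LinearMap.congr_fun₂ h x y
  refine wedge_ext fun v ↦ wedge_ext fun w ↦ ?_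
  exact congrArg Subtype.val (hm v w) |>.trans (ExteriorAlgebra.ιMulti_mul_ιMulti v w).symm

/-- The map `Λ^p ⊗ Λ^q → Λ ⊗ Λ`, `x ⊗ y ↦ x ⊗ (y ∧ z)`. -/
def inclTensorMul (p q : ℕ) (z : ExteriorAlgebra K (V K n)) :
    Lam K n p ⊗[K] Lam K n q →ₗ[K] TensorSq K (V K n) :=
  TensorProduct.map (⋀[K]^p (V K n)).subtype
    (LinearMap.mulRight K z ∘ₗ (⋀[K]^q (V K n)).subtype)

@[simp]
lemma inclTensorMul_tmul {p q : ℕ} (z : ExteriorAlgebra K (V K n)) (x : Lam K n p)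
    (y : Lam K n q) :
    inclTensorMul p q z (x ⊗ₜ y) =
      (x : ExteriorAlgebra K (V K n)) ⊗ₜ[K] ((y : ExteriorAlgebra K (V K n)) * z) := rfl

lemma factorial_smul_comulMap {p q : ℕ}
    {D : Lam K n (p + q) →ₗ[K] Lam K n p ⊗[K] Lam K n q} (hD : IsComulMap K n p q D)
    (x : Lam K n (p + q)) (z : ExteriorAlgebra K (V K n)) :
    q.factorial • inclTensorMul p q z (D x) = (transfer ^ q) (↑x ⊗ₜ[K] z) := by
  suffices h : q.factorial • inclTensorMul p q z ∘ₗ D =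
      (transfer ^ q) ∘ₗ (TensorProduct.mk K _ _).flip z ∘ₗ (⋀[K]^(p + q) (V K n)).subtype from
    LinearMap.congr_fun h x
  refine wedge_ext fun v ↦ ?_
  have hshuffle : inclTensorMul p q z (D (wedge K n v)) = shuffleSum rfl v z := by
    rw [hD v, map_sum]
    refine Finset.sum_congr (Finset.ext fun σ ↦ by simp [mem_shuffles]) fun σ _ ↦ map_zsmul _ _ _
  exact (congrArg _ hshuffle).trans (factorial_smul_shuffleSum rfl v z)

variable {mf : ∀ p q : ℕ, Lam K n p ⊗[K] Lam K n q →ₗ[K] Lam K n (p + q)}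
variable {Df : ∀ p q : ℕ, Lam K n (p + q) →ₗ[K] Lam K n p ⊗[K] Lam K n q}

lemma inclTensor_mulMap_assoc (hmf : ∀ p q, IsMulMap K n p q (mf p q)) {p t b c : ℕ}
    (h : t + b = c) (d : Lam K n p ⊗[K] Lam K n t) (z : Lam K n b) :
    inclTensor K n p c (TensorProduct.map LinearMap.id
      ((ecast K n h).toLinearMap ∘ₗ mf t b)
        (TensorProduct.assoc K (Lam K n p) (Lam K n t) (Lam K n b) (d ⊗ₜ z))) =
      inclTensorMul p t z d := by
  induction d with
  | zero => simp
  | add x y hx hy => simp only [TensorProduct.add_tmul, map_add, hx, hy]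
  | tmul x y => simp [coe_ecast, coe_mulMap (hmf t b)]

lemma inclTensor_theta1 (hmf : ∀ p q, IsMulMap K n p q (mf p q))
    (hDf : ∀ p q, IsComulMap K n p q (Df p q)) {a b : ℕ} (hb : 1 ≤ b)
    (t : Lam K n (a + 1) ⊗[K] Lam K n (b - 1)) :
    inclTensor K n a b (theta1 K n mf Df a b hb t) =
      transfer (inclTensor K n (a + 1) (b - 1) t) := by
  induction t with
  | zero => simp
  | add x y hx hy => simp only [map_add, hx, hy]
  | tmul x z =>
    have h := factorial_smul_comulMap (hDf (a + 1 - 1) 1)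
      (ecast K n (by lia : a + 1 = (a + 1 - 1) + 1) x) z
    rw [coe_ecast, pow_one, Nat.factorial_one, one_smul] at h
    rw [theta1, LinearMap.comp_apply, LinearEquiv.coe_coe, inclTensor_congr_ecast]
    exact (inclTensor_mulMap_assoc hmf _ _ z).trans h

lemma inclTensor_pairMul (hmf : ∀ p q, IsMulMap K n p q (mf p q)) {p q k c : ℕ}
    (d : Lam K n p ⊗[K] Lam K n q) (y : Lam K n k) (z : Lam K n c) :
    inclTensor K n (p + k) (q + c) (pairMul K n mf p q k c (d ⊗ₜ (y ⊗ₜ z))) =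
      mulRightFst (y : ExteriorAlgebra K (V K n)) (inclTensorMul p q z d) := by
  induction d with
  | zero => simp
  | add s t hs ht => simp only [TensorProduct.add_tmul, map_add, hs, ht]
  | tmul u v => simp [pairMul, coe_mulMap (hmf _ _)]

lemma factorial_smul_inclTensor_betaMap (hmf : ∀ p q, IsMulMap K n p q (mf p q))
    (hDf : ∀ p q, IsComulMap K n p q (Df p q)) {a b k : ℕ} (hka : k ≤ a) (hkb : k ≤ b)
    (x : Lam K n a) (y : Lam K n k) (z : Lam K n (b - k)) :
    k.factorial • inclTensor K n a b (betaMap K n mf Df a b k hka hkb (x ⊗ₜ (y ⊗ₜ z))) =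
      mulRightFst (y : ExteriorAlgebra K (V K n)) ((transfer ^ k) (↑x ⊗ₜ[K] ↑z)) := by
  rw [betaMap, LinearMap.comp_apply, LinearEquiv.coe_coe, inclTensor_congr_ecast,
    LinearMap.comp_apply, TensorProduct.map_tmul, LinearMap.id_apply, inclTensor_pairMul hmf,
    ← map_nsmul, LinearMap.comp_apply, factorial_smul_comulMap (hDf _ _), LinearEquiv.coe_coe,
    coe_ecast]

lemma factorial_smul_inclTensor_gammaMap (hmf : ∀ p q, IsMulMap K n p q (mf p q))
    (hDf : ∀ p q, IsComulMap K n p q (Df p q)) {a b k : ℕ} (hka : k ≤ a) (hkb : k ≤ b)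
    (x : Lam K n a) (y : Lam K n k) (z : Lam K n (b - k)) :
    k.factorial • inclTensor K n a b (gammaMap K n mf Df a b k hka hkb (x ⊗ₜ (y ⊗ₜ z))) =
      k.factorial • mulLeftSnd (y : ExteriorAlgebra K (V K n)) (↑x ⊗ₜ[K] ↑z) -
        mulRightFst (y : ExteriorAlgebra K (V K n)) ((transfer ^ k) (↑x ⊗ₜ[K] ↑z)) := by
  rw [gammaMap, LinearMap.sub_apply, map_sub, smul_sub,
    factorial_smul_inclTensor_betaMap hmf hDf]
  simp [coe_ecast, coe_mulMap (hmf _ _)]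

lemma gammaMap_tmul_mem_range_theta1 (hmf : ∀ p q, IsMulMap K n p q (mf p q))
    (hDf : ∀ p q, IsComulMap K n p q (Df p q)) {a b k : ℕ} (hfac : (k.factorial : K) ≠ 0)
    (hka : k ≤ a) (hkb : k ≤ b) (hb : 1 ≤ b) (x : Lam K n a) (y : Lam K n k)
    (z : Lam K n (b - k)) :
    gammaMap K n mf Df a b k hka hkb (x ⊗ₜ (y ⊗ₜ z)) ∈
      LinearMap.range (theta1 K n mf Df a b hb) := by
  have hmod := mulRightFst_transfer_pow_smodEq y.2 (by lia : b - k + k = b - 1 + 1)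
    (tmul_mem_bideg x.2 z.2)
  rw [← range_inclTensor] at hmod
  obtain ⟨_, ⟨t, rfl⟩, ht⟩ := SModEq.sub_mem.1 hmod.symm
  rw [← inclTensor_theta1 hmf hDf hb] at ht
  refine (Submodule.smul_mem_iff _ hfac).1 ⟨t, inclTensor_injective a b ?_⟩
  rw [ht, map_smul, Nat.cast_smul_eq_nsmul, factorial_smul_inclTensor_gammaMap hmf hDf]

end ExteriorPowers

theorem statement9_general (K : Type) [Field K] (n : ℕ) (a b k : ℕ)
    (hfac : (k.factorial : K) ≠ 0) (hka : k ≤ a) (hkb : k ≤ b) (hb : 1 ≤ b)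
    (mf : ∀ p q : ℕ, Lam K n p ⊗[K] Lam K n q →ₗ[K] Lam K n (p + q))
    (Df : ∀ p q : ℕ, Lam K n (p + q) →ₗ[K] Lam K n p ⊗[K] Lam K n q)
    (hmf : ∀ p q, IsMulMap K n p q (mf p q))
    (hDf : ∀ p q, IsComulMap K n p q (Df p q)) :
    LinearMap.range (gammaMap K n mf Df a b k hka hkb) ≤
      LinearMap.range (theta1 K n mf Df a b hb) := by
  rintro _ ⟨t, rfl⟩
  induction t with
  | zero => simp
  | add s t hs ht => rw [map_add]; exact add_mem hs ht
  | tmul x w =>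
    induction w with
    | zero => simp
    | add s t hs ht => rw [TensorProduct.tmul_add, map_add]; exact add_mem hs ht
    | tmul y z => exact gammaMap_tmul_mem_range_theta1 hmf hDf hfac hka hkb hb x y z

/-- Lemma 5.2 of the paper: `Im(γ_k) ⊆ Im(θ_1)` for `a ≥ b ≥ k ≥ 1`. -/
theorem statement9 (K : Type) [Field K] [CharZero K] (n : ℕ) (a b k : ℕ)
    (hba : b ≤ a) (hk1 : 1 ≤ k) (hkb : k ≤ b)
    (mf : ∀ p q : ℕ, Lam K n p ⊗[K] Lam K n q →ₗ[K] Lam K n (p+q))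
    (Df : ∀ p q : ℕ, Lam K n (p+q) →ₗ[K] Lam K n p ⊗[K] Lam K n q)
    (hmf : ∀ p q, IsMulMap K n p q (mf p q))
    (hDf : ∀ p q, IsComulMap K n p q (Df p q)) :
    LinearMap.range (gammaMap K n mf Df a b k (hkb.trans hba) hkb) ≤
      LinearMap.range (theta1 K n mf Df a b (hk1.trans hkb)) :=
  statement9_general K n a b k (Nat.cast_ne_zero.2 k.factorial_ne_zero) (hkb.trans hba) hkb
    (hk1.trans hkb) mf Df hmf hDf

end MMS
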